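/- W is the disjoint union, over w ∈ W^J, of the sets W_J ·_δ (w W_{I(J,w,δ)}): every element of W lies in W_J ·_δ (w W_{I(J,w,δ)}) for some w ∈ W^J, and for distinct w, w' ∈ W^J the sets W_J ·_δ (w W_{I(J,w,δ)}) and W_J ·_δ (w' W_{I(J,w',δ)}) are disjoint. -/

import Mathlib

open CoxeterSystem

variable {B : Type*} [Finite B] {W : Type*} [Group W] {M : CoxeterMatrix B}

namespace PartialConjugation

/-- The standard parabolic subgroup `W_J` of `W`, generated by the simple
reflections indexed by `J`. -/
def parab (cs : CoxeterSystem M W) (J : Set B) : Subgroup W :=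
  Subgroup.closure (cs.simple '' J)

/-- The simple reflection `s_j` (for `j ∈ J`), viewed as an element of `W_J`. -/
def sJ (cs : CoxeterSystem M W) (J : Set B) (j : B) (hj : j ∈ J) : parab cs J :=
  ⟨cs.simple j, Subgroup.subset_closure ⟨j, hj, rfl⟩⟩

/-- `w ∈ W^J`: `w` is a minimal length representative of its left coset `w W_J`. -/
def IsMinRep (cs : CoxeterSystem M W) (J : Set B) (w : W) : Prop :=
  ∀ v ∈ parab cs J, cs.length w ≤ cs.length (w * v)

variable (cs : CoxeterSystem M W) (J J' : Set B) (δ : parab cs J ≃* parab cs J')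

/-- `δ` carries the set of simple reflections indexed by `J` onto the set of
simple reflections indexed by `J'`. -/
def MapsSimples : Prop :=
  (∀ j, ∀ hj : j ∈ J, ∃ j' ∈ J', (δ (sJ cs J j hj) : W) = cs.simple j') ∧
  (∀ j' ∈ J', ∃ j, ∃ hj : j ∈ J, (δ (sJ cs J j hj) : W) = cs.simple j')

/-- `K` is a `w`-special subset of `J`. -/
def WSpecial (w : W) (K : Set B) : Prop :=
  K ⊆ J ∧ ∀ k ∈ K, ∃ j, ∃ hjJ : j ∈ J, j ∈ K ∧
    w * cs.simple k * w⁻¹ = (δ (sJ cs J j hjJ) : W)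

/-- The set `I(J, w, δ)`: the union of all `w`-special subsets of `J`. -/
def Iset (w : W) : Set B := ⋃₀ {K | WSpecial cs J J' δ w K}

/-- The set `W_J ·_δ V = {δ(u) v u⁻¹ : u ∈ W_J, v ∈ V}`. -/
def orbSet (V : Set W) : Set W :=
  {x | ∃ u : parab cs J, ∃ v ∈ V, x = (δ u : W) * v * (u : W)⁻¹}

/-- The orbit of `x` under the `δ`-twisted partial conjugation action of `W_J`. -/
def orbitOf (x : W) : Set W := orbSet cs J J' δ {x}

/-- The coset `w W_{I(J,w,δ)}`. -/
def coset (w : W) : Set W :=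
  {x | ∃ v ∈ parab cs (Iset cs J J' δ w), x = w * v}

/-- Elementary step `v →_i v'` of `δ`-twisted conjugation: `v' = δ(s_i) v s_i`
with `i ∈ J` and `ℓ(v') ≤ ℓ(v)`. -/
def StepRel (v v' : W) : Prop :=
  ∃ i, ∃ hi : i ∈ J, v' = (δ (sJ cs J i hi) : W) * v * cs.simple i ∧
    cs.length v' ≤ cs.length v

/-- The relation `v →_{J,δ} v'`. -/
def ToRel : W → W → Prop := Relation.ReflTransGen (StepRel cs J J' δ)

/-- The relation `v ≈_{J,δ} v'`. -/
def Approx (v v' : W) : Prop := ToRel cs J J' δ v v' ∧ ToRel cs J J' δ v' v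

/-- The Bruhat order on `W`. -/
def bruhatLE (cs : CoxeterSystem M W) : W → W → Prop :=
  Relation.ReflTransGen
    (fun a b => ∃ t, cs.IsReflection t ∧ b = a * t ∧ cs.length a < cs.length b)

/-- The set of minimal length elements in the orbit of `x`. -/
def orbMin (x : W) : Set W :=
  {y ∈ orbitOf cs J J' δ x | ∀ z ∈ orbitOf cs J J' δ x, cs.length y ≤ cs.length z}


/-! ### The sign cocycle and the exchange condition -/

open Classical in
/-- The action of a simple reflection on `W × ℤ/2`. -/
noncomputable def sgnStep (cs : CoxeterSystem M W) (i : B) : Function.End (W × ZMod 2) :=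
  fun p => (cs.simple i * p.1 * cs.simple i, p.2 + if p.1 = cs.simple i then 1 else 0)

open Classical in
theorem sgnStep_pow (cs : CoxeterSystem M W) (i j : B) (m : ℕ) (t : W) (e : ZMod 2) :
    ((sgnStep cs i * sgnStep cs j) ^ m) (t, e) =
      ((cs.simple i * cs.simple j) ^ m * t * ((cs.simple i * cs.simple j) ^ m)⁻¹,
        e + ∑ n ∈ Finset.range (2 * m),
          if t = ((cs.simple i * cs.simple j) ^ n)⁻¹ * cs.simple j then 1 else 0) := by
  have hi := cs.simple_mul_simple_self i
  have hj := cs.simple_mul_simple_self j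
  have hi' := cs.inv_simple i
  have hj' := cs.inv_simple j
  set a := cs.simple i
  set b := cs.simple j
  have hcomm : ∀ n : ℕ, b * (a * b) ^ n = ((a * b) ^ n)⁻¹ * b := by
    intro n
    induction n with
    | zero => simp
    | succ n ih =>
      rw [pow_succ, ← mul_assoc, ih, ← pow_succ, pow_succ', mul_inv_rev, mul_inv_rev, hi', hj']
      rw [mul_assoc, mul_assoc, mul_assoc, ← mul_assoc b a b]
  induction m with
  | zero => simp only [pow_zero]; simp; rfl
  | succ m ih =>
    rw [pow_succ']
    change (sgnStep cs i) ((sgnStep cs j) (((sgnStep cs i * sgnStep cs j) ^ m) (t, e))) = _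
    rw [ih]
    have e1 : ((a * b) ^ m * t * ((a * b) ^ m)⁻¹ = b) ↔ t = ((a * b) ^ (2 * m))⁻¹ * b := by
      rw [mul_inv_eq_iff_eq_mul, hcomm, ← eq_inv_mul_iff_mul_eq, ← mul_assoc, ← mul_inv_rev,
        ← pow_add, two_mul]
    have e2 : (b * ((a * b) ^ m * t * ((a * b) ^ m)⁻¹) * b = a) ↔
        t = ((a * b) ^ (2 * m + 1))⁻¹ * b := by
      have h1 : (b * ((a * b) ^ m * t * ((a * b) ^ m)⁻¹) * b = a) ↔
          ((a * b) ^ m * t * ((a * b) ^ m)⁻¹) = (a * b)⁻¹ * b := by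
        generalize (a * b) ^ m * t * ((a * b) ^ m)⁻¹ = z
        rw [mul_inv_rev, hi', hj']
        constructor
        · intro h
          rw [← h]
          simp only [mul_assoc, hj, mul_one]
          simp only [← mul_assoc, hj, one_mul]
        · intro h
          rw [h]
          simp only [mul_assoc, hj, mul_one]
          simp only [← mul_assoc, hj, one_mul]
      rw [h1, mul_inv_eq_iff_eq_mul, mul_assoc, hcomm, ← eq_inv_mul_iff_mul_eq, ← mul_assoc,
        ← mul_assoc, ← mul_inv_rev, ← mul_inv_rev, ← pow_succ', ← pow_add]
      rw [show m + (m + 1) = 2 * m + 1 by ring]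
    have h2 : 2 * (m + 1) = 2 * m + 1 + 1 := by ring
    rw [h2, Finset.sum_range_succ, Finset.sum_range_succ]
    simp only [sgnStep]
    refine Prod.ext ?_ ?_
    · change a * (b * ((a * b) ^ m * t * ((a * b) ^ m)⁻¹) * b) * a = _
      rw [pow_succ' (a * b) m, mul_inv_rev, mul_inv_rev, hi', hj']
      simp only [mul_assoc]
    · change e + _ + (if (a * b) ^ m * t * ((a * b) ^ m)⁻¹ = b then (1 : ZMod 2) else 0) +
        (if b * ((a * b) ^ m * t * ((a * b) ^ m)⁻¹) * b = a then (1 : ZMod 2) else 0) = _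
      simp only [e1, e2]
      ring

theorem sgnStep_liftable (cs : CoxeterSystem M W) : M.IsLiftable (sgnStep cs) := by
  classical
  intro i j
  funext p
  obtain ⟨t, e⟩ := p
  rw [sgnStep_pow, cs.simple_mul_simple_pow]
  refine Prod.ext (by simp [Function.End.one_def]) ?_
  simp only [two_mul, Finset.sum_range_add, pow_add, cs.simple_mul_simple_pow, one_mul,
    CharTwo.add_self_eq_zero, add_zero]
  rfl

/-- The homomorphism to the transformation monoid. -/
noncomputable def sgnHom (cs : CoxeterSystem M W) : W →* Function.End (W × ZMod 2) :=
  cs.lift ⟨sgnStep cs, sgnStep_liftable cs⟩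

/-- The sign cocycle. -/
noncomputable def eta (cs : CoxeterSystem M W) (w t : W) : ZMod 2 := (sgnHom cs w (t, 0)).2

open Classical in
theorem sgnHom_simple_mul (cs : CoxeterSystem M W) (i : B) (w : W) (p : W × ZMod 2) :
    sgnHom cs (cs.simple i * w) p = sgnStep cs i (sgnHom cs w p) := by
  rw [map_mul, sgnHom, cs.lift_apply_simple]
  rfl

theorem sgnHom_apply (cs : CoxeterSystem M W) (w t : W) (e : ZMod 2) :
    sgnHom cs w (t, e) = (w * t * w⁻¹, e + eta cs w t) := by
  induction w using cs.simple_induction_left generalizing e with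
  | one => simp [eta, Function.End.one_def]
  | mul_simple_left w i ih =>
    rw [eta, sgnHom_simple_mul, sgnHom_simple_mul, ih, ih]
    simp only [sgnStep, mul_inv_rev, cs.inv_simple, mul_assoc, zero_add, add_assoc]

open Classical in
theorem eta_simple_mul (cs : CoxeterSystem M W) (i : B) (w t : W) :
    eta cs (cs.simple i * w) t = eta cs w t + if w * t * w⁻¹ = cs.simple i then 1 else 0 := by
  rw [eta, sgnHom_simple_mul, sgnHom_apply]
  simp [sgnStep]

theorem eta_one (cs : CoxeterSystem M W) (t : W) : eta cs 1 t = 0 := by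
  simp [eta, Function.End.one_def]

theorem eta_mul (cs : CoxeterSystem M W) (x y t : W) :
    eta cs (x * y) t = eta cs y t + eta cs x (y * t * y⁻¹) := by
  rw [eta, map_mul]
  change (sgnHom cs x (sgnHom cs y (t, 0))).2 = _
  rw [sgnHom_apply, sgnHom_apply]
  simp

theorem erase_of_eta (cs : CoxeterSystem M W) (t : W) (ω : List B)
    (h : eta cs (cs.wordProd ω) t ≠ 0) :
    ∃ k < ω.length, cs.wordProd ω * t = cs.wordProd (ω.eraseIdx k) := by
  induction ω with
  | nil => simp [eta_one] at h
  | cons i ω ih =>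
    rw [cs.wordProd_cons, eta_simple_mul] at h
    by_cases hc : cs.wordProd ω * t * (cs.wordProd ω)⁻¹ = cs.simple i
    · refine ⟨0, by simp, ?_⟩
      rw [mul_inv_eq_iff_eq_mul] at hc
      rw [cs.wordProd_cons, mul_assoc, hc]
      simp
    · rw [if_neg hc, add_zero] at h
      obtain ⟨k, hk, e⟩ := ih h
      refine ⟨k + 1, by simpa using hk, ?_⟩
      rw [cs.wordProd_cons, mul_assoc, e, List.eraseIdx_cons_succ, cs.wordProd_cons]

/-- The exchange condition. -/
theorem exchange (cs : CoxeterSystem M W) (ω : List B) (j : B)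
    (h : cs.length (cs.wordProd ω * cs.simple j) < cs.length (cs.wordProd ω)) :
    ∃ k < ω.length, cs.wordProd ω * cs.simple j = cs.wordProd (ω.eraseIdx k) := by
  apply erase_of_eta
  have h0 : eta cs (cs.simple j) (cs.simple j) = 1 := by
    have := eta_simple_mul cs j 1 (cs.simple j)
    simpa [eta_one] using this
  have h1 : eta cs (cs.wordProd ω) (cs.simple j) =
      1 + eta cs (cs.wordProd ω * cs.simple j) (cs.simple j) := by
    have := eta_mul cs (cs.wordProd ω * cs.simple j) (cs.simple j) (cs.simple j)
    simpa [h0] using this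
  have h2 : eta cs (cs.wordProd ω * cs.simple j) (cs.simple j) = 0 := by
    by_contra hne
    obtain ⟨ω', hr, e⟩ := cs.exists_isReduced (cs.wordProd ω * cs.simple j)
    rw [e] at hne
    obtain ⟨k, hk, e2⟩ := erase_of_eta cs _ _ hne
    rw [← e, cs.simple_mul_simple_cancel_right] at e2
    have h3 := cs.length_wordProd_le (ω'.eraseIdx k)
    rw [← e2, List.length_eraseIdx_of_lt hk] at h3
    have h4 := hr.eq
    rw [← e] at h4
    omega
  rw [h1, h2]
  simp

/-! ### Parabolic subgroups -/

theorem simple_mem (cs : CoxeterSystem M W) {J : Set B} {j : B} (hj : j ∈ J) :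
    cs.simple j ∈ parab cs J := Subgroup.subset_closure ⟨j, hj, rfl⟩

theorem wordProd_mem (cs : CoxeterSystem M W) {J : Set B} (L : List B) (h : ∀ i ∈ L, i ∈ J) :
    cs.wordProd L ∈ parab cs J := by
  induction L with
  | nil => simp
  | cons i L ih =>
    rw [cs.wordProd_cons]
    exact mul_mem (simple_mem cs (h i (by simp))) (ih fun k hk => h k (by simp [hk]))

theorem exists_word (cs : CoxeterSystem M W) {J : Set B} {u : W} (hu : u ∈ parab cs J) :
    ∃ L : List B, (∀ i ∈ L, i ∈ J) ∧ u = cs.wordProd L := by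
  induction hu using Subgroup.closure_induction with
  | mem x hx =>
    obtain ⟨j, hj, rfl⟩ := hx
    exact ⟨[j], by simpa using hj, by simp⟩
  | one => exact ⟨[], by simp, by simp⟩
  | mul x y _ _ hx hy =>
    obtain ⟨L, h, rfl⟩ := hx
    obtain ⟨L', h', rfl⟩ := hy
    refine ⟨L ++ L', ?_, by rw [cs.wordProd_append]⟩
    intro i hi
    rcases List.mem_append.1 hi with hi | hi
    · exact h i hi
    · exact h' i hi
  | inv x _ hx =>
    obtain ⟨L, h, rfl⟩ := hx
    exact ⟨L.reverse, by simpa using h, by rw [cs.wordProd_reverse]⟩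

theorem exists_reduced_aux (cs : CoxeterSystem M W) {J : Set B} (L : List B)
    (hL : ∀ i ∈ L, i ∈ J) :
    ∃ L' : List B, (∀ i ∈ L', i ∈ J) ∧ cs.wordProd L = cs.wordProd L' ∧ cs.IsReduced L' := by
  induction L using List.reverseRecOn with
  | nil => exact ⟨[], by simp, rfl, by simp [CoxeterSystem.IsReduced]⟩
  | append_singleton L i ih =>
    obtain ⟨L', h, e, hr⟩ := ih fun k hk => hL k (by simp [hk])
    have hi : i ∈ J := hL i (by simp)
    have e' : cs.wordProd (L ++ [i]) = cs.wordProd L' * cs.simple i := by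
      rw [cs.wordProd_append, e, cs.wordProd_singleton]
    have hr' := hr.eq
    rcases cs.length_mul_simple (cs.wordProd L') i with hl | hl
    · refine ⟨L' ++ [i], ?_, ?_, ?_⟩
      · intro k hk
        rcases List.mem_append.1 hk with hk | hk
        · exact h k hk
        · simp only [List.mem_singleton] at hk
          exact hk ▸ hi
      · rw [e', cs.wordProd_append, cs.wordProd_singleton]
      · rw [CoxeterSystem.IsReduced, cs.wordProd_append, cs.wordProd_singleton, hl, hr']
        simp
    · obtain ⟨k, hk, e2⟩ := exchange cs L' i (by omega)
      refine ⟨L'.eraseIdx k, fun m hm => h m (List.mem_of_mem_eraseIdx hm), by rw [e', e2], ?_⟩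
      rw [CoxeterSystem.IsReduced, ← e2, List.length_eraseIdx_of_lt hk]
      omega

theorem exists_reduced (cs : CoxeterSystem M W) {J : Set B} {u : W} (hu : u ∈ parab cs J) :
    ∃ L : List B, (∀ i ∈ L, i ∈ J) ∧ u = cs.wordProd L ∧ cs.IsReduced L := by
  obtain ⟨L, h, rfl⟩ := exists_word cs hu
  exact exists_reduced_aux cs L h

theorem length_add_aux (cs : CoxeterSystem M W) {J : Set B} {w : W} (hw : IsMinRep cs J w)
    (L : List B) (hL : ∀ i ∈ L, i ∈ J) (hr : cs.IsReduced L) :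
    cs.length (w * cs.wordProd L) = cs.length w + L.length := by
  induction L using List.reverseRecOn with
  | nil => simp
  | append_singleton L i ih =>
    have hLJ : ∀ k ∈ L, k ∈ J := fun k hk => hL k (by simp [hk])
    have hi : i ∈ J := hL i (by simp)
    have hr1 : cs.IsReduced L := by
      have := hr.take L.length
      simpa using this
    have ih := ih hLJ hr1
    have e' : w * cs.wordProd (L ++ [i]) = w * cs.wordProd L * cs.simple i := by
      rw [cs.wordProd_append, cs.wordProd_singleton, mul_assoc]
    rw [e']
    rcases cs.length_mul_simple (w * cs.wordProd L) i with hl | hl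
    · rw [hl, ih]; simp; ring
    · exfalso
      obtain ⟨ω, hω, e⟩ := cs.exists_isReduced w
      have ew : w * cs.wordProd L = cs.wordProd (ω ++ L) := by rw [cs.wordProd_append, e]
      have hωl := hω.eq
      rw [← e] at hωl
      obtain ⟨k, hk, e2⟩ := exchange cs (ω ++ L) i (by rw [← ew]; omega)
      rw [← ew] at e2
      rcases lt_or_ge k ω.length with hkω | hkω
      · rw [List.eraseIdx_append_of_lt_length hkω, cs.wordProd_append] at e2
        have hm := hw (cs.wordProd L * cs.simple i * (cs.wordProd L)⁻¹)
          (mul_mem (mul_mem (wordProd_mem cs L hLJ) (simple_mem cs hi))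
            (inv_mem (wordProd_mem cs L hLJ)))
        rw [← mul_assoc, ← mul_assoc, e2, mul_inv_cancel_right] at hm
        have := cs.length_wordProd_le (ω.eraseIdx k)
        rw [List.length_eraseIdx_of_lt hkω] at this
        omega
      · rw [List.eraseIdx_append_of_length_le hkω, cs.wordProd_append, ← e, mul_assoc] at e2
        have e3 := mul_left_cancel e2
        have h5 := hr.eq
        rw [cs.wordProd_append, cs.wordProd_singleton, e3] at h5
        have := cs.length_wordProd_le (L.eraseIdx (k - ω.length))
        have h6 := List.length_eraseIdx_le L (k - ω.length)
        simp only [List.length_append, List.length_singleton] at h5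
        omega

theorem length_add (cs : CoxeterSystem M W) {J : Set B} {w v : W} (hw : IsMinRep cs J w)
    (hv : v ∈ parab cs J) : cs.length (w * v) = cs.length w + cs.length v := by
  obtain ⟨L, h, rfl, hr⟩ := exists_reduced cs hv
  rw [length_add_aux cs hw L h hr, hr.eq]

theorem exists_minRep (cs : CoxeterSystem M W) (J : Set B) (x : W) :
    ∃ w, IsMinRep cs J w ∧ ∃ v ∈ parab cs J, x = w * v := by
  obtain ⟨v, hv⟩ : ∃ v : parab cs J, ∀ a : parab cs J,
      cs.length (x * v) ≤ cs.length (x * a) :=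
    ⟨_, fun a => Function.argmin_le (fun v : parab cs J => cs.length (x * v)) a⟩
  refine ⟨x * v, ?_, (v : W)⁻¹, inv_mem v.2, by simp⟩
  intro a ha
  have := hv (v * ⟨a, ha⟩)
  simpa [mul_assoc] using this

theorem minRep_of_no_descent (cs : CoxeterSystem M W) {J : Set B} {w : W}
    (h : ∀ j ∈ J, cs.length w < cs.length (w * cs.simple j)) : IsMinRep cs J w := by
  obtain ⟨w₀, hw₀, v, hv, rfl⟩ := exists_minRep cs J w
  obtain ⟨L, hL, rfl, hr⟩ := exists_reduced cs hv
  rcases List.eq_nil_or_concat L with rfl | ⟨L', j, rfl⟩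
  · simpa using hw₀
  · exfalso
    rw [List.concat_eq_append] at *
    have hj : j ∈ J := hL j (by simp)
    have h1 := h j hj
    rw [length_add cs hw₀ hv, mul_assoc, length_add cs hw₀ (mul_mem hv (simple_mem cs hj)),
      hr.eq, cs.wordProd_append, cs.wordProd_singleton, cs.simple_mul_simple_cancel_right] at h1
    have := cs.length_wordProd_le L'
    simp at h1
    omega

theorem minRep_unique (cs : CoxeterSystem M W) {J : Set B} {w w' v v' : W}
    (hw : IsMinRep cs J w) (hw' : IsMinRep cs J w') (hv : v ∈ parab cs J)
    (hv' : v' ∈ parab cs J) (e : w * v = w' * v') : w = w' := by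
  have e1 : w' = w * (v * v'⁻¹) := by rw [← mul_assoc, e, mul_inv_cancel_right]
  have hm : v * v'⁻¹ ∈ parab cs J := mul_mem hv (inv_mem hv')
  have h1 := length_add cs hw hm
  rw [← e1] at h1
  have h2 := hw' _ (inv_mem hm)
  have e2 : w' * (v * v'⁻¹)⁻¹ = w := by rw [e1, mul_inv_cancel_right]
  rw [e2] at h2
  have h3 : cs.length (v * v'⁻¹) = 0 := by omega
  rw [cs.length_eq_zero_iff] at h3
  rw [e1, h3, mul_one]

/-- Deodhar's lemma. -/
theorem deodhar (cs : CoxeterSystem M W) {J : Set B} {w : W} (hw : IsMinRep cs J w) (i : B) :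
    IsMinRep cs J (cs.simple i * w) ∨ ∃ j ∈ J, cs.simple i * w = w * cs.simple j := by
  by_cases h : ∀ j ∈ J, cs.length (cs.simple i * w) < cs.length (cs.simple i * w * cs.simple j)
  · exact Or.inl (minRep_of_no_descent cs h)
  · right
    push Not at h
    obtain ⟨j, hj, hl⟩ := h
    refine ⟨j, hj, ?_⟩
    have hne := cs.length_mul_simple_ne (cs.simple i * w) j
    obtain ⟨ω, hω, e⟩ := cs.exists_isReduced w
    have ew : cs.simple i * w = cs.wordProd (i :: ω) := by rw [cs.wordProd_cons, e]
    obtain ⟨k, hk, e2⟩ := exchange cs (i :: ω) j (by rw [← ew]; omega)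
    rw [← ew] at e2
    cases k with
    | zero =>
      rw [List.eraseIdx_cons_zero, ← e] at e2
      nth_rewrite 2 [← e2]
      rw [cs.simple_mul_simple_cancel_right]
    | succ k =>
      exfalso
      rw [List.eraseIdx_cons_succ, cs.wordProd_cons, mul_assoc] at e2
      have e3 := mul_left_cancel e2
      have h1 := hw _ (simple_mem cs hj)
      have h2 := cs.length_wordProd_le (ω.eraseIdx k)
      have hk' : k < ω.length := by simpa using hk
      rw [List.length_eraseIdx_of_lt hk', ← e3] at h2
      have h3 := hω.eq
      rw [← e] at h3
      omega

/-! ### Partial conjugation -/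

theorem push_through (hδ : MapsSimples cs J J' δ) {w : W} (hw : IsMinRep cs J w)
    (L : List B) (hL : ∀ i ∈ L, i ∈ J) :
    ∀ u : parab cs J, (u : W) = cs.wordProd L →
      ∃ w', IsMinRep cs J w' ∧ ∃ a ∈ parab cs J, (δ u : W) * w = w' * a ∧
        cs.length a ≤ L.length ∧ (cs.length a = L.length → w' = w) := by
  induction L with
  | nil =>
    intro u hu
    have : u = 1 := Subtype.ext (by simpa using hu)
    subst this
    exact ⟨w, hw, 1, one_mem _, by simp, by simp, fun _ => rfl⟩
  | cons i L ih =>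
    intro u hu
    have hi : i ∈ J := hL i (by simp)
    have hL' : ∀ k ∈ L, k ∈ J := fun k hk => hL k (by simp [hk])
    have eu : u = sJ cs J i hi * ⟨cs.wordProd L, wordProd_mem cs L hL'⟩ :=
      Subtype.ext (by rw [hu, cs.wordProd_cons]; rfl)
    obtain ⟨w', hw', a, ha, e, hl, himp⟩ := ih hL' ⟨cs.wordProd L, wordProd_mem cs L hL'⟩ rfl
    obtain ⟨i', -, hi'⟩ := hδ.1 i hi
    have e1 : (δ u : W) * w = cs.simple i' * (w' * a) := by
      rw [eu, map_mul, Subgroup.coe_mul, hi', mul_assoc, e]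
    rcases deodhar cs hw' i' with h | ⟨j, hj, h⟩
    · refine ⟨_, h, a, ha, by rw [e1, mul_assoc], by simp; omega, ?_⟩
      intro h'
      simp at h'
      omega
    · refine ⟨w', hw', cs.simple j * a, mul_mem (simple_mem cs hj) ha, ?_, ?_, ?_⟩
      · rw [e1, ← mul_assoc, h, mul_assoc]
      · have := cs.length_mul_le (cs.simple j) a
        rw [cs.length_simple] at this
        simp; omega
      · intro h'
        have := cs.length_mul_le (cs.simple j) a
        rw [cs.length_simple] at this
        simp at h'
        exact himp (by omega)

theorem finite_swap {α β : Type*} {A : Set α} (hA : A.Finite) {f g : α → β}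
    (hf : Function.Injective f) (hg : Function.Injective g)
    (h : ∀ a ∈ A, ∃ b ∈ A, f a = g b) : ∀ b ∈ A, ∃ a ∈ A, f a = g b := by
  have hsub : f '' A ⊆ g '' A := by
    rintro _ ⟨a, ha, rfl⟩
    obtain ⟨b, hb, e⟩ := h a ha
    exact ⟨b, hb, e.symm⟩
  have heq : f '' A = g '' A := by
    apply Set.eq_of_subset_of_ncard_le hsub _ (hA.image g)
    rw [Set.ncard_image_of_injective _ hf, Set.ncard_image_of_injective _ hg]
  intro b hb
  have : g b ∈ f '' A := heq ▸ ⟨b, hb, rfl⟩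
  exact this

/-- The simple reflections indexed by `K` inside `W_J`. -/
def simpSet (K : Set B) : Set (parab cs J) := {x | ∃ k, ∃ hk : k ∈ J, k ∈ K ∧ x = sJ cs J k hk}

theorem simpSet_finite (K : Set B) : (simpSet cs J K).Finite := by
  apply Set.Finite.of_finite_image (f := Subtype.val) _ Subtype.val_injective.injOn
  apply (Set.finite_range cs.simple).subset
  rintro _ ⟨_, ⟨k, hk, _, rfl⟩, rfl⟩
  exact ⟨k, rfl⟩

theorem conj_inj (w : W) : Function.Injective (fun x : parab cs J => w * (x : W) * w⁻¹) := by
  intro x y h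
  exact Subtype.ext (mul_left_cancel (mul_right_cancel h))

theorem delta_inj : Function.Injective (fun x : parab cs J => (δ x : W)) := by
  intro x y h
  exact δ.injective (Subtype.ext h)

theorem special_swap {w : W} {K : Set B} (hK : WSpecial cs J J' δ w K) (j : B) (hj : j ∈ J)
    (hjK : j ∈ K) : ∃ k ∈ K, w * cs.simple k * w⁻¹ = (δ (sJ cs J j hj) : W) := by
  obtain ⟨_, ⟨k, hk, hkK, rfl⟩, e⟩ := finite_swap (simpSet_finite cs J K) (conj_inj cs J w)
    (delta_inj cs J J' δ) (by
      rintro _ ⟨k, hk, hkK, rfl⟩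
      obtain ⟨j, hjJ, hjK, e⟩ := hK.2 k hkK
      exact ⟨_, ⟨j, hjJ, hjK, rfl⟩, e⟩) (sJ cs J j hj) ⟨j, hj, hjK, rfl⟩
  exact ⟨k, hkK, e⟩

theorem special_of_swap {w : W} {K : Set B} (hKJ : K ⊆ J)
    (h : ∀ j, ∀ hj : j ∈ J, j ∈ K → ∃ k ∈ K, w * cs.simple k * w⁻¹ = (δ (sJ cs J j hj) : W)) :
    WSpecial cs J J' δ w K := by
  refine ⟨hKJ, fun k hk => ?_⟩
  obtain ⟨_, ⟨j, hj, hjK, rfl⟩, e⟩ := finite_swap (simpSet_finite cs J K)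
    (delta_inj cs J J' δ) (conj_inj cs J w) (by
      rintro _ ⟨j, hj, hjK, rfl⟩
      obtain ⟨k, hkK, e⟩ := h j hj hjK
      exact ⟨_, ⟨k, hKJ hkK, hkK, rfl⟩, e.symm⟩) (sJ cs J k (hKJ hk)) ⟨k, hKJ hk, hk, rfl⟩
  exact ⟨j, hj, hjK, e.symm⟩

theorem iset_special (w : W) : WSpecial cs J J' δ w (Iset cs J J' δ w) := by
  refine ⟨?_, ?_⟩
  · rintro k ⟨K, hK, hk⟩
    exact hK.1 hk
  · rintro k ⟨K, hK, hk⟩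
    obtain ⟨j, hj, hjK, e⟩ := hK.2 k hk
    exact ⟨j, hj, ⟨K, hK, hjK⟩, e⟩

theorem parab_mono {K J : Set B} (h : K ⊆ J) : parab cs K ≤ parab cs J :=
  Subgroup.closure_mono (Set.image_mono h)

theorem delta_mul_special {w : W} {K : Set B} (hK : WSpecial cs J J' δ w K) (L : List B)
    (hL : ∀ i ∈ L, i ∈ K) : ∀ t : parab cs J, (t : W) = cs.wordProd L →
      ∃ t' ∈ parab cs K, (δ t : W) * w = w * t' := by
  induction L with
  | nil =>
    intro u hu
    have : u = 1 := Subtype.ext (by simpa using hu)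
    subst this
    exact ⟨1, one_mem _, by simp⟩
  | cons i L ih =>
    intro u hu
    have hi : i ∈ K := hL i (by simp)
    have hL' : ∀ k ∈ L, k ∈ K := fun k hk => hL k (by simp [hk])
    have hm : cs.wordProd L ∈ parab cs J := parab_mono cs hK.1 (wordProd_mem cs L hL')
    have eu : u = sJ cs J i (hK.1 hi) * ⟨cs.wordProd L, hm⟩ :=
      Subtype.ext (by rw [hu, cs.wordProd_cons]; rfl)
    obtain ⟨t', ht', e⟩ := ih hL' ⟨cs.wordProd L, hm⟩ rfl
    obtain ⟨k, hk, ek⟩ := special_swap cs J J' δ hK i (hK.1 hi) hi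
    refine ⟨cs.simple k * t', mul_mem (simple_mem cs hk) ht', ?_⟩
    rw [eu, map_mul, Subgroup.coe_mul, ← ek, mul_assoc, e]
    simp [mul_assoc]

/-- Twisted conjugation by `W_K` preserves `w W_K` for special `K`. -/
theorem conj_special {w : W} {K : Set B} (hK : WSpecial cs J J' δ w K) (t : parab cs J)
    (ht : (t : W) ∈ parab cs K) {v : W} (hv : v ∈ parab cs K) :
    ∃ v' ∈ parab cs K, (δ t : W) * (w * v) * (t : W)⁻¹ = w * v' := by
  obtain ⟨L, hL, e⟩ := exists_word cs ht
  obtain ⟨t', ht', e'⟩ := delta_mul_special cs J J' δ hK L hL t e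
  exact ⟨t' * v * (t : W)⁻¹, mul_mem (mul_mem ht' hv) (inv_mem ht), by
    rw [← mul_assoc, e']; simp [mul_assoc]⟩

theorem uniqueness (hδ : MapsSimples cs J J' δ) {w w' : W} (hw : IsMinRep cs J w)
    (hw' : IsMinRep cs J w') {K K' : Set B} (hK : WSpecial cs J J' δ w K)
    (hK' : WSpecial cs J J' δ w' K') (u₀ : parab cs J) {v₀ v₀' : W}
    (hv₀ : v₀ ∈ parab cs K) (hv₀' : v₀' ∈ parab cs K')
    (e₀ : (δ u₀ : W) * (w * v₀) * (u₀ : W)⁻¹ = w' * v₀') : w = w' := by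
  classical
  let P : ℕ → Prop := fun n => ∃ u : parab cs J, cs.length (u : W) = n ∧ ∃ v ∈ parab cs K,
    ∃ v' ∈ parab cs K', (δ u : W) * (w * v) * (u : W)⁻¹ = w' * v'
  have hP : ∃ n, P n := ⟨_, u₀, rfl, v₀, hv₀, v₀', hv₀', e₀⟩
  obtain ⟨u, hu, v, hv, v', hv', e⟩ := Nat.find_spec hP
  have hmin : ∀ (y : parab cs J), ∀ z ∈ parab cs K, ∀ z' ∈ parab cs K',
      (δ y : W) * (w * z) * (y : W)⁻¹ = w' * z' → cs.length (u : W) ≤ cs.length (y : W) := by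
    intro y z hz z' hz' h
    rw [hu]
    exact Nat.find_min' hP ⟨y, rfl, z, hz, z', hz', h⟩
  have hKJ := parab_mono cs hK.1
  have hKJ' := parab_mono cs hK'.1
  -- minimality on both sides
  have hmr : IsMinRep cs K (u : W) := by
    intro t ht
    obtain ⟨z, hz, ez⟩ := conj_special cs J J' δ hK (⟨t, hKJ ht⟩⁻¹ : parab cs J)
      (by simpa using ht) hv
    refine hmin (u * ⟨t, hKJ ht⟩) z hz v' hv' ?_
    rw [← ez, ← e]
    simp [mul_assoc]
  have hml : IsMinRep cs K' (u : W)⁻¹ := by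
    intro t ht
    obtain ⟨z, hz, ez⟩ := conj_special cs J J' δ hK' (⟨t, hKJ' ht⟩⁻¹ : parab cs J)
      (by simpa using ht) hv'
    have := hmin (⟨t, hKJ' ht⟩⁻¹ * u) v hv z hz (by rw [← ez, ← e]; simp [mul_assoc])
    rw [cs.length_inv, ← cs.length_inv (_ * t)]
    simpa using this
  obtain ⟨L, hL, eL, hr⟩ := exists_reduced cs u.2
  have hrl := hr.eq
  rw [← eL] at hrl
  obtain ⟨w₁, hw₁, a, ha, e₁, hla, himp⟩ := push_through cs J J' δ hδ hw L hL u eL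
  obtain ⟨w₂, hw₂, b, hb, e₂, hlb, -⟩ := push_through cs J J' δ hδ hw' L.reverse
    (by simpa using hL) u⁻¹ (by rw [cs.wordProd_reverse, ← eL]; rfl)
  have f₁ : w₁ * (a * v) = w' * (v' * u) := by
    rw [← mul_assoc, ← e₁, ← mul_assoc, ← e]; simp [mul_assoc]
  have f₂ : w₂ * (b * v') = w * (v * (u : W)⁻¹) := by
    rw [← mul_assoc, ← e₂, mul_assoc, ← e]; simp [mul_assoc]
  have g₁ : w₁ = w' := minRep_unique cs hw₁ hw' (mul_mem ha (hKJ hv))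
    (mul_mem (hKJ' hv') u.2) f₁
  have g₂ : w₂ = w := minRep_unique cs hw₂ hw (mul_mem hb (hKJ' hv'))
    (mul_mem (hKJ hv) (inv_mem u.2)) f₂
  rw [g₁] at f₁
  rw [g₂] at f₂
  have k₁ := mul_left_cancel f₁
  have k₂ := mul_left_cancel f₂
  have l₁ : cs.length (v' * u) = cs.length v' + cs.length (u : W) := by
    have := length_add cs hml (inv_mem hv')
    rw [← mul_inv_rev, cs.length_inv, cs.length_inv, cs.length_inv] at this
    omega
  have l₂ : cs.length (v * (u : W)⁻¹) = cs.length v + cs.length (u : W) := by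
    have := length_add cs hmr (inv_mem hv)
    rw [← cs.length_inv, mul_inv_rev, inv_inv, cs.length_inv] at this
    omega
  have m₁ := cs.length_mul_le a v
  have m₂ := cs.length_mul_le b v'
  rw [k₁, l₁] at m₁
  rw [k₂, l₂] at m₂
  rw [List.length_reverse] at hlb
  rw [← g₁, himp (by omega)]

/-- A pair `(w, L)` representing an element in the orbit of `x`. -/
def Good (x w : W) (L : List B) : Prop :=
  (∀ i ∈ L, i ∈ J) ∧ ∃ u : parab cs J, w * cs.wordProd L = (δ u : W) * x * (u : W)⁻¹

theorem rotate (hδ : MapsSimples cs J J' δ) {x w : W} {L : List B} {i : B}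
    (hw : IsMinRep cs J w) (hg : Good cs J J' δ x w (L ++ [i]))
    (hmin : ∀ w' L', IsMinRep cs J w' → Good cs J J' δ x w' L' → L.length + 1 ≤ L'.length)
    (hi : i ∈ J) :
    ∃ j ∈ J, w * cs.simple j * w⁻¹ = (δ (sJ cs J i hi) : W) ∧
      Good cs J J' δ x w (j :: L) := by
  obtain ⟨hL, u, e⟩ := hg
  obtain ⟨i', -, hi'⟩ := hδ.1 i hi
  have hL' : ∀ k ∈ L, k ∈ J := fun k hk => hL k (by simp [hk])
  have key : cs.simple i' * w * cs.wordProd L =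
      (δ (sJ cs J i hi * u) : W) * x * ((sJ cs J i hi * u : parab cs J) : W)⁻¹ := by
    have h1 : cs.wordProd L = cs.wordProd (L ++ [i]) * cs.simple i := by
      rw [cs.wordProd_append, cs.wordProd_singleton, cs.simple_mul_simple_cancel_right]
    have h2 : ((sJ cs J i hi : parab cs J) : W)⁻¹ = cs.simple i := cs.inv_simple i
    rw [h1, map_mul, Subgroup.coe_mul, Subgroup.coe_mul, mul_inv_rev, hi', h2, mul_assoc,
      ← mul_assoc w, e]
    simp only [mul_assoc]
  rcases deodhar cs hw i' with h | ⟨j, hj, h⟩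
  · have := hmin _ L h ⟨hL', _, key⟩
    omega
  · refine ⟨j, hj, by rw [← h, hi']; simp, ?_, sJ cs J i hi * u, ?_⟩
    · intro k hk
      rcases List.mem_cons.1 hk with rfl | hk
      · exact hj
      · exact hL' k hk
    · rw [← key, h, cs.wordProd_cons, mul_assoc]

theorem existence (hδ : MapsSimples cs J J' δ) (x : W) : ∃ w : W, IsMinRep cs J w ∧
      x ∈ orbSet cs J J' δ (coset cs J J' δ w) := by
  classical
  let P : ℕ → Prop := fun n => ∃ w L, IsMinRep cs J w ∧ Good cs J J' δ x w L ∧ L.length = n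
  have hP : ∃ n, P n := by
    obtain ⟨w, hw, v, hv, e⟩ := exists_minRep cs J x
    obtain ⟨L, hL, rfl⟩ := exists_word cs hv
    exact ⟨_, w, L, hw, ⟨hL, 1, by rw [← e]; simp⟩, rfl⟩
  obtain ⟨w, L₀, hw, hg, hN⟩ := Nat.find_spec hP
  set N := Nat.find hP with hNdef
  have hmin : ∀ w' L', IsMinRep cs J w' → Good cs J J' δ x w' L' → N ≤ L'.length :=
    fun w' L' h h' => Nat.find_min' hP ⟨w', L', h, h', rfl⟩
  let K : Set B := {i | ∃ L, Good cs J J' δ x w L ∧ L.length = N ∧ i ∈ L}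
  have hKJ : K ⊆ J := by
    rintro i ⟨L, hL, -, hi⟩
    exact hL.1 i hi
  have main : ∀ (L₂ L₁ : List B) (i : B) (hi : i ∈ J),
      Good cs J J' δ x w (L₁ ++ i :: L₂) → (L₁ ++ i :: L₂).length = N →
      ∃ k ∈ K, w * cs.simple k * w⁻¹ = (δ (sJ cs J i hi) : W) := by
    intro L₂
    induction L₂ using List.reverseRecOn with
    | nil =>
      intro L₁ i hi hG hl
      simp only [List.length_append, List.length_singleton] at hl
      obtain ⟨j, hj, e, hG'⟩ := rotate cs J J' δ hδ hw hG (by rw [hl]; exact hmin) hi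
      exact ⟨j, ⟨_, hG', by simpa using hl, by simp⟩, e⟩
    | append_singleton L₂ m ih =>
      intro L₁ i hi hG hl
      have e0 : L₁ ++ i :: (L₂ ++ [m]) = (L₁ ++ i :: L₂) ++ [m] := by simp
      rw [e0] at hG hl
      rw [List.length_append, List.length_singleton] at hl
      obtain ⟨j, hj, e, hG'⟩ := rotate cs J J' δ hδ hw hG (by rw [hl]; exact hmin)
        (hG.1 m (by simp))
      exact ih (j :: L₁) i hi hG' (by simpa using hl)
  have hsp : WSpecial cs J J' δ w K := by
    apply special_of_swap cs J J' δ hKJ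
    rintro i hi ⟨L, hG, hl, hiL⟩
    obtain ⟨L₁, L₂, rfl⟩ := List.append_of_mem hiL
    exact main L₂ L₁ i hi hG hl
  obtain ⟨hL₀, u, e⟩ := hg
  refine ⟨w, hw, u⁻¹, w * cs.wordProd L₀, ⟨cs.wordProd L₀, ?_, rfl⟩, ?_⟩
  · apply wordProd_mem
    intro i hi
    exact ⟨K, hsp, L₀, ⟨hL₀, u, e⟩, hN, hi⟩
  · rw [e]
    simp [mul_assoc]

/-- `W` is the disjoint union of the sets
`W_J ·_δ (w W_{I(J,w,δ)})` over `w ∈ W^J`. -/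
theorem stmt1 (hδ : MapsSimples cs J J' δ) :
    (∀ x : W, ∃ w : W, IsMinRep cs J w ∧
      x ∈ orbSet cs J J' δ (coset cs J J' δ w)) ∧
    (∀ w w' : W, IsMinRep cs J w → IsMinRep cs J w' → w ≠ w' →
      ∀ x : W, x ∈ orbSet cs J J' δ (coset cs J J' δ w) →
        x ∉ orbSet cs J J' δ (coset cs J J' δ w')) := by
  refine ⟨existence cs J J' δ hδ, ?_⟩
  rintro w w' hw hw' hne x ⟨u, _, ⟨v, hv, rfl⟩, e⟩ ⟨u', _, ⟨v', hv', rfl⟩, e'⟩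
  apply hne
  refine uniqueness cs J J' δ hδ hw hw' (iset_special cs J J' δ w) (iset_special cs J J' δ w')
    (u'⁻¹ * u) hv hv' ?_
  have h : (δ u : W) * (w * v) * (u : W)⁻¹ = (δ u' : W) * (w' * v') * (u' : W)⁻¹ := by
    rw [← e, ← e']
  have h2 : w' * v' = (δ u' : W)⁻¹ * ((δ u : W) * (w * v) * (u : W)⁻¹) * u' := by
    rw [h]; simp [mul_assoc]
  rw [h2]
  simp [mul_assoc]

end PartialConjugation
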